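/- If ⊑^r is a right-stable order and ⊑^l a left-stable order on F that commute (⊑^r ∘ ⊑^l = ⊑^l ∘ ⊑^r), then the order ⊑ = ⊑^r ∘ ⊑^l is stable: for all f : X → Z, g : Y → W, and R ⊆ Z × W, (Ff × Fg)⁻¹(Rel_⊑(F)(R)) ⊆ Rel_⊑(F)((f × g)⁻¹(R)). -/

import Mathlib

/-- Relation lifting of a functor `F`, defined via spans. -/
def relLift (F : Type → Type) (Fmap : ∀ {X Y : Type}, (X → Y) → F X → F Y)
    {X Y : Type} (R : X → Y → Prop) (u : F X) (v : F Y) : Prop :=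
  ∃ w : F {p : X × Y // R p.1 p.2},
    Fmap (fun p => p.1.1) w = u ∧ Fmap (fun p => p.1.2) w = v

theorem right_comp_left_stable
    (F : Type → Type) (Fmap : ∀ {X Y : Type}, (X → Y) → F X → F Y)
    (ordr ordl : ∀ X : Type, F X → F X → Prop)
    -- ⊑^r and ⊑^l are functorial preorders on F
    (hreflr : ∀ (X : Type) (u : F X), ordr X u u)
    (htransr : ∀ (X : Type) (u v w : F X), ordr X u v → ordr X v w → ordr X u w)
    (hmonor : ∀ (X Y : Type) (f : X → Y) (u v : F X),
        ordr X u v → ordr Y (Fmap f u) (Fmap f v))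
    (hrefll : ∀ (X : Type) (u : F X), ordl X u u)
    (htransl : ∀ (X : Type) (u v w : F X), ordl X u v → ordl X v w → ordl X u w)
    (hmonol : ∀ (X Y : Type) (f : X → Y) (u v : F X),
        ordl X u v → ordl Y (Fmap f u) (Fmap f v))
    -- ⊑^r is right-stable
    (hrs : ∀ (X Y : Type) (f : X → Y) (u : F Y) (v : F X),
        ordr Y u (Fmap f v) → ∃ w : F X, Fmap f w = u ∧ ordr X w v)
    -- ⊑^l is left-stable
    (hls : ∀ (X Y : Type) (f : X → Y) (u : F X) (v : F Y),
        ordl Y (Fmap f u) v → ∃ w : F X, Fmap f w = v ∧ ordl X u w)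
    -- ⊑^r and ⊑^l commute
    (hcomm : ∀ (X : Type) (u v : F X),
        (∃ w, ordl X u w ∧ ordr X w v) ↔ (∃ w, ordr X u w ∧ ordl X w v))
    -- the relation lifting commutes with inverse images (weak-pullback preservation)
    (hpb : ∀ (X Y Z W : Type) (f : X → Z) (g : Y → W) (R : Z → W → Prop)
        (u : F X) (v : F Y),
        relLift F @Fmap (fun x y => R (f x) (g y)) u v ↔
          relLift F @Fmap R (Fmap f u) (Fmap g v)) :
    -- then ⊑ = ⊑^r ∘ ⊑^l is stable:
    -- (Ff × Fg)⁻¹(Rel_⊑(F)(R)) ⊆ Rel_⊑(F)((f × g)⁻¹(R))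
    ∀ (X Y Z W : Type) (f : X → Z) (g : Y → W) (R : Z → W → Prop)
      (u : F X) (v : F Y),
      (∃ (a : F Z) (b : F W),
          (∃ w, ordl Z (Fmap f u) w ∧ ordr Z w a) ∧
          relLift F @Fmap R a b ∧
          (∃ w, ordl W b w ∧ ordr W w (Fmap g v))) →
        ∃ (a : F X) (b : F Y),
          (∃ w, ordl X u w ∧ ordr X w a) ∧
          relLift F @Fmap (fun x y => R (f x) (g y)) a b ∧
          (∃ w, ordl Y b w ∧ ordr Y w v) := by
  rintro X Y Z W f g R u v ⟨a, b, ⟨w, huw, hwa⟩, ⟨c, rfl, rfl⟩, ⟨w', hbw, hwv⟩⟩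
  obtain ⟨c', rfl, hc'⟩ := hrs _ _ _ _ _ hwa
  obtain ⟨d, hd1, hd2⟩ := (hcomm W _ _).mpr ⟨_, hmonor _ _ (fun p => p.1.2) _ _ hc', hbw⟩
  obtain ⟨e, rfl, he⟩ := hls _ _ _ _ _ hd1
  obtain ⟨u', hu', huu'⟩ := hls _ _ f u _ (htransl _ _ _ _ huw (hmonol _ _ _ _ _ he))
  obtain ⟨v', hv', hvv'⟩ := hrs _ _ g _ v (htransr _ _ _ _ hd2 hwv)
  exact ⟨u', v', ⟨u', huu', hreflr _ _⟩,
    (hpb _ _ _ _ f g R u' v').mpr ⟨e, hu'.symm, hv'.symm⟩, ⟨v', hrefll _ _, hvv'⟩⟩
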